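/- arXiv:1702.02826 — 2 statements merged into one kernel-verified Lean document; each statement's English description precedes it below -/
import Mathlib

section
/- Fix 0 < α < 2 and δ₁, δ₂ > 0, and let g = g_{α,δ₁,δ₂}: ℝ → ℝ be the piecewise map defined below. Let μ be the probability measure on ℝ with density ρ_{α,δ₁,δ₂} with respect to Lebesgue measure. Then g is measure-preserving for μ: the pushforward of μ under g equals μ. -/
open MeasureTheory Filter

/-- The asymmetric power-law invariant density `ρ_{α,δ₁,δ₂}`. -/
noncomputable def rhoDensity (α δ₁ δ₂ : ℝ) (x : ℝ) : ℝ :=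
  if 0 < x then α * δ₁ ^ α * x ^ (α - 1) / (Real.pi * (1 + δ₁ ^ (2 * α) * x ^ (2 * α)))
  else if x < 0 then α * δ₂ ^ α * |x| ^ (α - 1) / (Real.pi * (1 + δ₂ ^ (2 * α) * |x| ^ (2 * α)))
  else 0

/-- The piecewise chaotic map `g_{α,δ₁,δ₂}` of Umeno. -/
noncomputable def gMap (α δ₁ δ₂ : ℝ) (x : ℝ) : ℝ :=
  if 1 / δ₁ < x then
    1 / (δ₁ ^ 2 * |x|) * ((|δ₁ * x| ^ (2 * α) - 1) / 2) ^ (1 / α)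
  else if 0 < x ∧ x < 1 / δ₁ then
    -(1 / (δ₁ * δ₂ * |x|)) * ((1 - |δ₁ * x| ^ (2 * α)) / 2) ^ (1 / α)
  else if -(1 / δ₂) < x ∧ x < 0 then
    1 / (δ₁ * δ₂ * |x|) * ((1 - |δ₂ * x| ^ (2 * α)) / 2) ^ (1 / α)
  else if x < -(1 / δ₂) then
    -(1 / (δ₂ ^ 2 * |x|)) * ((|δ₂ * x| ^ (2 * α) - 1) / 2) ^ (1 / α)
  else 0

/-! In the coordinate `u = (δ₁ x) ^ α` for `x ≥ 0`, `u = -(δ₂ |x|) ^ α` for `x ≤ 0`, the density `ρ`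
becomes the standard Cauchy density and `g` becomes the Boole map `u ↦ (u - u⁻¹) / 2`. Writing
`u = tan θ` turns the Cauchy law into the uniform law on `ℝ / πℤ` and, since
`(tan θ - (tan θ)⁻¹) / 2 = tan (2 θ - π / 2)`, the Boole map into an affine doubling map, which
preserves the uniform law. -/

open ProbabilityTheory Set Function

section ChangeOfVariables

theorem measurePreserving_of_leftInverse {X Y : Type*} [MeasurableSpace X] [MeasurableSpace Y]
    {μ : Measure X} {ν : Measure Y} {f : X → Y} {h : Y → X} (hf : MeasurePreserving f μ ν)
    (hh : Measurable h) (hhf : LeftInverse h f) : MeasurePreserving h ν μ where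
  measurable := hh
  map_eq := by rw [← hf.map_eq, Measure.map_map hh hf.measurable, hhf.comp_eq_id, Measure.map_id]

theorem map_restrict_withDensity_of_hasDerivWithinAt {f f' : ℝ → ℝ} {p q : ℝ → ENNReal}
    {s : Set ℝ} (hf : Measurable f) (hs : MeasurableSet s)
    (hf' : ∀ x ∈ s, HasDerivWithinAt f (f' x) s x) (hinj : InjOn f s)
    (hpq : ∀ x ∈ s, p x = ENNReal.ofReal |f' x| * q (f x)) :
    ((volume.restrict s).withDensity p).map f = (volume.restrict (f '' s)).withDensity q := by
  ext t ht
  have hst : MeasurableSet (s ∩ f ⁻¹' t) := hs.inter (hf ht)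
  rw [Measure.map_apply hf ht, withDensity_apply _ (hf ht), withDensity_apply _ ht,
    Measure.restrict_restrict (hf ht), Measure.restrict_restrict ht, inter_comm,
    inter_comm t, ← image_inter_preimage,
    lintegral_image_eq_lintegral_abs_deriv_mul hst
      (fun x hx ↦ (hf' x hx.1).mono inter_subset_left) (hinj.mono inter_subset_left)]
  exact setLIntegral_congr_fun hst fun x hx ↦ hpq x hx.1

end ChangeOfVariables

section Boole

/-- The Boole map `u ↦ (u - 1 / u) / 2`, the model to which `gMap` is conjugated; the factor `1 / 2`
is the one for which the standard Cauchy law is invariant. -/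
noncomputable def booleMap (u : ℝ) : ℝ := (u - u⁻¹) / 2

local instance : Fact (0 < Real.pi) := ⟨Real.pi_pos⟩

theorem map_arctan_cauchyMeasure :
    (cauchyMeasure 0 1).map Real.arctan = ENNReal.ofReal Real.pi⁻¹ •
      volume.restrict (Ioc (-(Real.pi / 2)) (-(Real.pi / 2) + Real.pi)) := by
  have hdensity (x : ℝ) : cauchyPDF 0 1 x =
      ENNReal.ofReal |1 / (1 + x ^ 2)| * ENNReal.ofReal Real.pi⁻¹ := by
    rw [← ENNReal.ofReal_mul (abs_nonneg _), abs_of_pos (by positivity), cauchyPDF_def,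
      cauchyPDFReal_def']
    simp only [sub_zero, NNReal.coe_one, inv_one, div_one, mul_one, one_div, mul_comm]
  have hmap := map_restrict_withDensity_of_hasDerivWithinAt
    (q := fun _ ↦ ENNReal.ofReal Real.pi⁻¹) Real.measurable_arctan MeasurableSet.univ
    (fun x _ ↦ (Real.hasDerivAt_arctan x).hasDerivWithinAt) Real.arctan_injective.injOn
    (fun x _ ↦ hdensity x)
  rw [Measure.restrict_univ, image_univ, Real.range_arctan, withDensity_const,
    ← cauchyMeasure_of_scale_ne_zero 0 one_ne_zero] at hmap
  rw [hmap, restrict_Ioo_eq_restrict_Ioc]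
  congr 3
  ring

theorem measurePreserving_coe_arctan :
    MeasurePreserving (fun x ↦ (Real.arctan x : AddCircle Real.pi)) (cauchyMeasure 0 1)
      (ENNReal.ofReal Real.pi⁻¹ • volume) :=
  ((AddCircle.measurePreserving_mk Real.pi _).smul_measure _).comp
    ⟨Real.measurable_arctan, map_arctan_cauchyMeasure⟩

theorem measurable_tan_lift : Measurable Real.tan_periodic.lift := by
  have htan : Measurable Real.tan := by
    rw [show Real.tan = fun x ↦ Real.sin x / Real.cos x from funext Real.tan_eq_sin_div_cos]
    fun_prop
  exact measurable_from_quotient.2 htan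

theorem measurePreserving_tan_lift :
    MeasurePreserving Real.tan_periodic.lift
      (ENNReal.ofReal Real.pi⁻¹ • (volume : Measure (AddCircle Real.pi))) (cauchyMeasure 0 1) :=
  measurePreserving_of_leftInverse measurePreserving_coe_arctan measurable_tan_lift
    Real.tan_arctan

-- With `0⁻¹ = 0` and `tan (π / 2) = 0`, this also holds at the poles.
theorem booleMap_tan (θ : ℝ) : booleMap (Real.tan θ) = Real.tan (2 * θ - Real.pi / 2) := by
  rw [← neg_sub, Real.tan_neg, Real.tan_pi_div_two_sub, Real.tan_two_mul, booleMap]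
  field_simp
  ring

theorem semiconj_tan_lift_booleMap :
    Semiconj Real.tan_periodic.lift
      (fun θ : AddCircle Real.pi ↦ 2 • θ + ((-(Real.pi / 2) : ℝ) : AddCircle Real.pi))
      booleMap := by
  intro θ
  induction θ using QuotientAddGroup.induction_on with
  | H θ =>
    change Real.tan (2 • θ + -(Real.pi / 2)) = booleMap (Real.tan θ)
    rw [booleMap_tan, two_nsmul, two_mul, sub_eq_add_neg]

theorem measurePreserving_booleMap :
    MeasurePreserving booleMap (cauchyMeasure 0 1) (cauchyMeasure 0 1) :=
  measurePreserving_tan_lift.of_semiconj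
    ((AddCircle.ergodic_nsmul_add _ one_lt_two).toMeasurePreserving.smul_measure _)
    semiconj_tan_lift_booleMap (by unfold booleMap; fun_prop)

end Boole

section SignedRpow

/-- The two-sided power equal to `(a x) ^ α` for `x ≥ 0` and to `-(b |x|) ^ α` for `x ≤ 0` (when
`α ≠ 0`), the coordinate change that straightens `gMap`. Since `a` and `b` stand inside the powers,
its inverse is again of this form, with parameters `α⁻¹`, `(a ^ α)⁻¹`, `(b ^ α)⁻¹`. -/
noncomputable def signedRpow (α a b x : ℝ) : ℝ := (a * x⁺) ^ α - (b * x⁻) ^ α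

variable {α a b x : ℝ}

theorem signedRpow_neg (α a b x : ℝ) : signedRpow α a b (-x) = -signedRpow α b a x := by
  simp [signedRpow]

theorem signedRpow_of_nonneg (hα : α ≠ 0) (hx : 0 ≤ x) : signedRpow α a b x = (a * x) ^ α := by
  simp [signedRpow, posPart_eq_self.2 hx, negPart_eq_zero.2 hx, Real.zero_rpow hα]

theorem signedRpow_zero (hα : α ≠ 0) : signedRpow α a b 0 = 0 := by
  simp [signedRpow_of_nonneg hα le_rfl, Real.zero_rpow hα]

theorem measurable_signedRpow (α a b : ℝ) : Measurable (signedRpow α a b) := by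
  have := measurable_id.max (measurable_const (a := (0 : ℝ)))
  unfold signedRpow
  fun_prop

theorem leftInverse_signedRpow (hα : α ≠ 0) (ha : 0 < a) (hb : 0 < b) :
    LeftInverse (signedRpow α⁻¹ (a ^ α)⁻¹ (b ^ α)⁻¹) (signedRpow α a b) := by
  have of_nonneg {a b x : ℝ} (ha : 0 < a) (hx : 0 ≤ x) :
      signedRpow α⁻¹ (a ^ α)⁻¹ (b ^ α)⁻¹ (signedRpow α a b x) = x := by
    rw [signedRpow_of_nonneg hα hx, signedRpow_of_nonneg (inv_ne_zero hα) (by positivity),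
      Real.mul_rpow ha.le hx, inv_mul_cancel_left₀ (by positivity), Real.rpow_rpow_inv hx hα]
  intro x
  rcases le_total 0 x with hx | hx
  · exact of_nonneg ha hx
  · rw [← neg_neg x, signedRpow_neg α, signedRpow_neg, of_nonneg hb (neg_nonneg.2 hx)]

theorem bijective_signedRpow (hα : α ≠ 0) (ha : 0 < a) (hb : 0 < b) :
    Bijective (signedRpow α a b) := by
  refine ⟨(leftInverse_signedRpow hα ha hb).injective, ?_⟩
  have hinv := leftInverse_signedRpow (a := (a ^ α)⁻¹) (b := (b ^ α)⁻¹) (inv_ne_zero hα)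
    (by positivity) (by positivity)
  simp only [inv_inv, Real.inv_rpow (Real.rpow_nonneg ha.le α),
    Real.inv_rpow (Real.rpow_nonneg hb.le α), Real.rpow_rpow_inv ha.le hα,
    Real.rpow_rpow_inv hb.le hα] at hinv
  exact hinv.surjective

end SignedRpow

section Density

variable {α δ₁ δ₂ x : ℝ}

theorem rhoDensity_neg (α δ₁ δ₂ x : ℝ) : rhoDensity α δ₁ δ₂ (-x) = rhoDensity α δ₂ δ₁ x := by
  rcases lt_trichotomy x 0 with hx | rfl | hx
  · simp [rhoDensity, hx, hx.not_gt, abs_of_neg]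
  · simp [rhoDensity]
  · simp [rhoDensity, hx, hx.not_gt, abs_of_pos]

theorem rhoDensity_nonneg (hα : 0 ≤ α) (hδ₁ : 0 ≤ δ₁) (hδ₂ : 0 ≤ δ₂) (x : ℝ) :
    0 ≤ rhoDensity α δ₁ δ₂ x := by
  unfold rhoDensity
  split_ifs <;> positivity

theorem rhoDensity_div_cauchyPDFReal (hα : α ≠ 0) (hδ₁ : 0 ≤ δ₁) (hx : 0 < x) :
    rhoDensity α δ₁ δ₂ x / cauchyPDFReal 0 1 (signedRpow α δ₁ δ₂ x) =
      α * δ₁ ^ α * x ^ (α - 1) := by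
  have hsq {y : ℝ} (hy : 0 ≤ y) : y ^ (2 * α) = (y ^ α) ^ 2 := by
    rw [mul_comm, Real.rpow_mul hy, Real.rpow_two]
  rw [rhoDensity, if_pos hx, signedRpow_of_nonneg hα hx.le, Real.mul_rpow hδ₁ hx.le, hsq hδ₁,
    hsq hx.le, cauchyPDFReal_def']
  simp only [sub_zero, NNReal.coe_one, inv_one, div_one, mul_one]
  field_simp

theorem hasDerivAt_signedRpow (hα : α ≠ 0) (hδ₁ : 0 ≤ δ₁) (hδ₂ : 0 ≤ δ₂) (hx : x ≠ 0) :
    HasDerivAt (signedRpow α δ₁ δ₂)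
      (rhoDensity α δ₁ δ₂ x / cauchyPDFReal 0 1 (signedRpow α δ₁ δ₂ x)) x := by
  have of_pos {a b x : ℝ} (ha : 0 ≤ a) (hx : 0 < x) : HasDerivAt (signedRpow α a b)
      (rhoDensity α a b x / cauchyPDFReal 0 1 (signedRpow α a b x)) x := by
    rw [rhoDensity_div_cauchyPDFReal hα ha hx]
    have hpow : HasDerivAt (fun y ↦ a ^ α * y ^ α) (α * a ^ α * x ^ (α - 1)) x :=
      ((Real.hasDerivAt_rpow_const (Or.inl hx.ne')).const_mul _).congr_deriv (by ring)
    refine hpow.congr_of_eventuallyEq ?_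
    filter_upwards [Ioi_mem_nhds hx] with y hy
    rw [signedRpow_of_nonneg hα (le_of_lt hy), Real.mul_rpow ha (le_of_lt hy)]
  rcases hx.lt_or_gt with hx | hx
  · have hodd : signedRpow α δ₁ δ₂ = fun y ↦ -signedRpow α δ₂ δ₁ (-y) := by
      funext y
      rw [signedRpow_neg, neg_neg]
    rw [hodd]
    refine ((of_pos hδ₂ (neg_pos.2 hx)).scomp x (hasDerivAt_neg x)).neg.congr_deriv ?_
    simp [rhoDensity_neg, cauchyPDFReal_def]
  · exact of_pos hδ₁ hx

theorem measurePreserving_signedRpow (hα : 0 < α) (hδ₁ : 0 < δ₁) (hδ₂ : 0 < δ₂) :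
    MeasurePreserving (signedRpow α δ₁ δ₂)
      (volume.withDensity fun x ↦ ENNReal.ofReal (rhoDensity α δ₁ δ₂ x)) (cauchyMeasure 0 1) := by
  have hbij := bijective_signedRpow hα.ne' hδ₁ hδ₂
  have himage : signedRpow α δ₁ δ₂ '' {0}ᶜ = {0}ᶜ := by
    rw [image_compl_eq hbij, image_singleton, signedRpow_zero hα.ne']
  have hdensity (x : ℝ) : ENNReal.ofReal (rhoDensity α δ₁ δ₂ x) =
      ENNReal.ofReal |rhoDensity α δ₁ δ₂ x / cauchyPDFReal 0 1 (signedRpow α δ₁ δ₂ x)| *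
        cauchyPDF 0 1 (signedRpow α δ₁ δ₂ x) := by
    have hc := cauchyPDF_pos 0 one_ne_zero (signedRpow α δ₁ δ₂ x)
    have hρ := rhoDensity_nonneg hα.le hδ₁.le hδ₂.le x
    rw [cauchyPDF_def, ← ENNReal.ofReal_mul (abs_nonneg _), abs_of_nonneg (by positivity),
      div_mul_cancel₀ _ hc.ne']
  refine ⟨measurable_signedRpow α δ₁ δ₂, ?_⟩
  have hmap := map_restrict_withDensity_of_hasDerivWithinAt (measurable_signedRpow α δ₁ δ₂)
    (measurableSet_singleton 0).compl
    (fun x hx ↦ (hasDerivAt_signedRpow hα.ne' hδ₁.le hδ₂.le hx).hasDerivWithinAt)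
    hbij.injective.injOn (fun x _ ↦ hdensity x)
  rwa [himage, restrict_compl_singleton, ← cauchyMeasure_of_scale_ne_zero 0 one_ne_zero] at hmap

end Density

section Conjugacy

variable {α δ₁ δ₂ x : ℝ}

theorem booleMap_neg (u : ℝ) : booleMap (-u) = -booleMap u := by
  simp only [booleMap, inv_neg]
  ring

theorem gMap_neg (hδ₁ : 0 < δ₁) (hδ₂ : 0 < δ₂) (x : ℝ) :
    gMap α δ₁ δ₂ (-x) = -gMap α δ₂ δ₁ x := by
  have h₁ : 0 < 1 / δ₁ := by positivity
  have h₂ : 0 < 1 / δ₂ := by positivity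
  simp only [gMap, abs_neg, mul_neg, neg_mul, mul_comm δ₂ δ₁]
  split_ifs <;> grind

theorem booleMap_rpow {w : ℝ} (hw : 0 < w) :
    booleMap (w ^ α) = (w ^ (2 * α) - 1) / 2 / w ^ α := by
  rw [booleMap, two_mul, Real.rpow_add hw]
  field_simp

theorem inv_rpow_mul_div_rpow {w c δ : ℝ} (hα : α ≠ 0) (hδ : 0 ≤ δ) (hw : 0 ≤ w) (hc : 0 ≤ c) :
    ((δ ^ α)⁻¹ * (c / w ^ α)) ^ α⁻¹ = 1 / (δ * w) * c ^ (1 / α) := by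
  rw [Real.mul_rpow (by positivity) (by positivity), Real.inv_rpow (by positivity),
    Real.rpow_rpow_inv hδ hα, Real.div_rpow hc (by positivity), Real.rpow_rpow_inv hw hα, one_div α]
  ring

theorem gMap_eq_conj_of_pos (hα : 0 < α) (hδ₁ : 0 < δ₁) (hδ₂ : 0 < δ₂) (hx : 0 < x) :
    gMap α δ₁ δ₂ x = signedRpow α⁻¹ (δ₁ ^ α)⁻¹ (δ₂ ^ α)⁻¹ (booleMap (signedRpow α δ₁ δ₂ x)) := by
  have hw : 0 < δ₁ * x := by positivity
  have hα' : α⁻¹ ≠ 0 := by positivity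
  rw [signedRpow_of_nonneg hα.ne' hx.le, booleMap_rpow hw]
  rcases lt_trichotomy x (1 / δ₁) with hlt | heq | hgt
  · have hc : 0 ≤ (1 - (δ₁ * x) ^ (2 * α)) / 2 := by
      have := Real.rpow_le_one hw.le ((lt_div_iff₀' hδ₁).1 hlt).le (by positivity : 0 ≤ 2 * α)
      linarith
    rw [← neg_sub 1, neg_div, neg_div, signedRpow_neg, signedRpow_of_nonneg hα' (by positivity),
      inv_rpow_mul_div_rpow hα.ne' hδ₂.le hw.le hc, gMap, if_neg hlt.not_gt, if_pos ⟨hx, hlt⟩,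
      abs_of_pos hx, abs_of_pos hw]
    ring_nf
  · have h₂ : 0 < 1 / δ₂ := by positivity
    rw [gMap, if_neg heq.not_gt, if_neg fun h ↦ h.2.ne heq, if_neg fun h ↦ h.2.not_gt hx,
      if_neg (by linarith), heq, mul_one_div_cancel hδ₁.ne']
    simp [signedRpow_zero hα']
  · have hc : 0 ≤ ((δ₁ * x) ^ (2 * α) - 1) / 2 := by
      have := Real.one_le_rpow ((div_lt_iff₀' hδ₁).1 hgt).le (by positivity : 0 ≤ 2 * α)
      linarith
    rw [signedRpow_of_nonneg hα' (by positivity), inv_rpow_mul_div_rpow hα.ne' hδ₁.le hw.le hc,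
      gMap, if_pos hgt, abs_of_pos hx, abs_of_pos hw]
    ring_nf

theorem gMap_eq_conj (hα : 0 < α) (hδ₁ : 0 < δ₁) (hδ₂ : 0 < δ₂) :
    gMap α δ₁ δ₂ =
      signedRpow α⁻¹ (δ₁ ^ α)⁻¹ (δ₂ ^ α)⁻¹ ∘ booleMap ∘ signedRpow α δ₁ δ₂ := by
  funext x
  simp only [comp_apply]
  rcases lt_trichotomy x 0 with hx | rfl | hx
  · rw [← neg_neg x, gMap_neg hδ₁ hδ₂, signedRpow_neg α, booleMap_neg, signedRpow_neg,
      gMap_eq_conj_of_pos hα hδ₂ hδ₁ (neg_pos.2 hx)]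
  · simp [gMap, booleMap, signedRpow_zero, hα.ne']
  · exact gMap_eq_conj_of_pos hα hδ₁ hδ₂ hx

end Conjugacy

theorem gMap_measure_preserving_general
    (α δ₁ δ₂ : ℝ) (hα0 : 0 < α) (hδ₁ : 0 < δ₁) (hδ₂ : 0 < δ₂)
    (μ : Measure ℝ)
    (hμ : μ = volume.withDensity (fun x => ENNReal.ofReal (rhoDensity α δ₁ δ₂ x))) :
    MeasurePreserving (gMap α δ₁ δ₂) μ μ := by
  rw [hμ, gMap_eq_conj hα0 hδ₁ hδ₂]
  have hφ := measurePreserving_signedRpow hα0 hδ₁ hδ₂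
  have hψ := measurePreserving_of_leftInverse hφ (measurable_signedRpow α⁻¹ _ _)
    (leftInverse_signedRpow hα0.ne' hδ₁ hδ₂)
  exact hψ.comp (measurePreserving_booleMap.comp hφ)

theorem gMap_measure_preserving
    (α δ₁ δ₂ : ℝ) (hα0 : 0 < α) (hα2 : α < 2) (hδ₁ : 0 < δ₁) (hδ₂ : 0 < δ₂)
    (μ : Measure ℝ)
    (hμ : μ = volume.withDensity (fun x => ENNReal.ofReal (rhoDensity α δ₁ δ₂ x))) :
    MeasurePreserving (gMap α δ₁ δ₂) μ μ := by
  exact gMap_measure_preserving_general α δ₁ δ₂ hα0 hδ₁ hδ₂ μ hμ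
end

section
/- (Chambers–Mallows–Stuck representation, α = 1.) Fix β ∈ [−1,1]. Let Θ and Ω be independent real random variables, Θ uniformly distributed on (−π/2, π/2) and Ω exponentially distributed with mean 1. Define R = (2/π)[(π/2 + βΘ) tan Θ − β log((π/2 · Ω cos Θ)/(π/2 + βΘ))]. Then R is distributed according to the stable law S(1, β, 1, 0): for every t ∈ ℝ, E[exp(itR)] = φ(t; 1, β, 1, 0). -/
open MeasureTheory ProbabilityTheory Filter

/-- `w(α,t)` in the definition of the stable characteristic function. -/
noncomputable def stableW (α t : ℝ) : ℝ :=
  if α = 1 then -(2 / Real.pi) * Real.log |t| else Real.tan (Real.pi * α / 2)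

/-- The characteristic function `φ(t; α, β, γ, μ)` of the stable law `S(α, β, γ, μ)`. -/
noncomputable def stableChar (α β γ μ : ℝ) (t : ℝ) : ℂ :=
  Complex.exp (Complex.I * (μ : ℂ) * (t : ℂ) -
    ((γ ^ α * |t| ^ α : ℝ) : ℂ) *
      (1 - Complex.I * (β : ℂ) * ((Real.sign t : ℝ) : ℂ) * ((stableW α t : ℝ) : ℂ)))

/-!
Put `b = 2 β / π` and let `t > 0`. Along `u₊(θ) = t (1 + b θ) (1 + i tan θ)` and its conjugate `u₋`
one has `log u± = L ± i θ` with `L` real, and `e^{±u±} u±^{i b t} = e^{±t} e^{i g(θ)}` with one and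
the same real phase `g`, which is `t R` up to `b t (log t + log Ω)`. Hankel's integral of
`e^{±u} u^{-(1 - i b t)}` over `u±` is `2 π i / Γ(1 - i b t)` for the upper sign and `0` for the
lower one. Since `du± / u± = (L' ± i) dθ`, subtracting the two identities, multiplied by `e^{∓t}`,
eliminates `L'` and leaves `∫ e^{i g} dθ = π e^{-t} / Γ(1 - i b t)`. The Gamma factor is cancelled
by `E Ω^{-i b t} = Γ(1 - i b t)`, and negative `t` follows by complex conjugation.

The straight-line Hankel integral is Fourier inversion of the Laplace transform `Γ(a) z^{-a}` of
`x₊^{a-1}`; the kernel is a derivative up to a faster decaying one, so its integral over any contour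
staying in a strip `0 < re z ≤ M` depends only on the ends.
-/

section Hankel

open Complex Set
open scoped Topology Real FourierTransform

theorem integrableOn_cpow_mul_cexp_neg_mul_Ioi {a r : ℂ} (ha : 0 < a.re) (hr : 0 < r.re) :
    IntegrableOn (fun x : ℝ ↦ (x : ℂ) ^ (a - 1) * exp (-(r * x))) (Ioi 0) := by
  have hreal := integrableOn_rpow_mul_exp_neg_mul_rpow (s := a.re - 1) (by linarith) one_pos hr
  refine Integrable.mono hreal (ContinuousOn.aestronglyMeasurable ?_ measurableSet_Ioi) ?_
  · exact ContinuousOn.mul (fun x hx ↦ (continuousAt_ofReal_cpow_const x _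
      (Or.inr (ne_of_gt hx))).continuousWithinAt) (by fun_prop)
  · filter_upwards [ae_restrict_mem measurableSet_Ioi] with x (hx : 0 < x)
    rw [norm_mul, norm_cpow_eq_rpow_re_of_pos hx, norm_exp, Real.norm_of_nonneg (by positivity)]
    simp

theorem hasDerivAt_integral_cpow_mul_cexp_neg_mul_Ioi {a r : ℂ} (ha : 0 < a.re) (hr : 0 < r.re) :
    HasDerivAt (fun r : ℂ ↦ ∫ x : ℝ in Ioi 0, (x : ℂ) ^ (a - 1) * exp (-(r * x)))
      (∫ x : ℝ in Ioi 0, (x : ℂ) ^ (a - 1) * (exp (-(r * x)) * -x)) r := by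
  have hopen (ρ : ℝ) : IsOpen {z : ℂ | ρ < z.re} := isOpen_lt continuous_const continuous_re
  have hbound := integrableOn_rpow_mul_exp_neg_mul_rpow (s := a.re) (b := r.re / 2)
    (by linarith) one_pos (by positivity)
  refine (hasDerivAt_integral_of_dominated_loc_of_deriv_le (μ := volume.restrict (Ioi 0))
    (F := fun r (x : ℝ) ↦ (x : ℂ) ^ (a - 1) * exp (-(r * x)))
    (F' := fun r (x : ℝ) ↦ (x : ℂ) ^ (a - 1) * (exp (-(r * x)) * -x))
    ((hopen (r.re / 2)).mem_nhds (half_lt_self hr)) ?_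
    (integrableOn_cpow_mul_cexp_neg_mul_Ioi ha hr) ?_ ?_ hbound ?_).2
  · filter_upwards [(hopen 0).mem_nhds hr] with z hz
    exact (integrableOn_cpow_mul_cexp_neg_mul_Ioi ha hz).aestronglyMeasurable
  · simp only [← mul_assoc]
    exact (integrableOn_cpow_mul_cexp_neg_mul_Ioi ha hr).aestronglyMeasurable.mul (by fun_prop)
  · filter_upwards [ae_restrict_mem measurableSet_Ioi]
      with x (hx : 0 < x) z (hz : r.re / 2 < z.re)
    have hpow : x ^ a.re = x ^ (a - 1).re * x := by rw [← Real.rpow_add_one hx.ne']; simp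
    calc ‖(x : ℂ) ^ (a - 1) * (exp (-(z * x)) * -x)‖
        = x ^ (a - 1).re * x * Real.exp (-z.re * x) := by
          rw [norm_mul, norm_mul, norm_cpow_eq_rpow_re_of_pos hx, norm_exp, norm_neg, norm_real,
            Real.norm_of_nonneg hx.le]
          simp
          ring
      _ ≤ x ^ a.re * Real.exp (-(r.re / 2) * x ^ (1 : ℝ)) := by
          rw [hpow, Real.rpow_one]
          gcongr
  · refine .of_forall fun x z _ ↦ HasDerivAt.const_mul _ (HasDerivAt.cexp ?_)
    simpa using ((hasDerivAt_id z).mul_const (x : ℂ)).fun_neg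

theorem integral_cpow_mul_cexp_neg_mul_Ioi {a r : ℂ} (ha : 0 < a.re) (hr : 0 < r.re) :
    ∫ x : ℝ in Ioi 0, (x : ℂ) ^ (a - 1) * exp (-(r * x)) = r ^ (-a) * Gamma a := by
  have hopen : IsOpen {z : ℂ | 0 < z.re} := isOpen_lt continuous_const continuous_re
  have hleft : AnalyticOnNhd ℂ
      (fun r ↦ ∫ x : ℝ in Ioi 0, (x : ℂ) ^ (a - 1) * exp (-(r * x))) {z : ℂ | 0 < z.re} :=
    DifferentiableOn.analyticOnNhd (fun z hz ↦ (hasDerivAt_integral_cpow_mul_cexp_neg_mul_Ioi ha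
      hz).differentiableAt.differentiableWithinAt) hopen
  have hright : AnalyticOnNhd ℂ (fun r ↦ r ^ (-a) * Gamma a) {z : ℂ | 0 < z.re} :=
    DifferentiableOn.analyticOnNhd (fun z hz ↦ ((differentiableAt_id.cpow_const
      (Or.inl hz)).mul_const _).differentiableWithinAt) hopen
  have hofReal : Tendsto ((↑) : ℝ → ℂ) (𝓝[≠] 1) (𝓝[≠] 1) :=
    continuous_ofReal.continuousWithinAt.tendsto_nhdsWithin fun x hx ↦ by simpa using hx
  refine hleft.eqOn_of_preconnected_of_frequently_eq hright
    (convex_halfSpace_re_gt 0).isPreconnected (z₀ := 1) (by simp)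
    (hofReal.frequently (Eventually.frequently ?_)) hr
  filter_upwards [nhdsWithin_le_nhds (lt_mem_nhds one_pos)] with x hx
  rw [Complex.integral_cpow_mul_exp_neg_mul_Ioi ha hx, one_div, inv_cpow, ← cpow_neg]
  rw [arg_ofReal_of_nonneg hx.le]
  exact Real.pi_pos.ne

/-- The integrand `e^{vz} z^{-a}` of Hankel's integral `∫ e^{vz} z^{-a} dz = 2πi v^{a-1} / Γ(a)`
over contours running from `-i∞` to `+i∞` through the right half-plane. -/
noncomputable def hankelKernel (v : ℝ) (a z : ℂ) : ℂ := exp (v * z) * z ^ (-a)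

/-- The truncated power `x₊ˢ`, equal to `xˢ` for `0 < x` and to `0` for `x ≤ 0`. -/
noncomputable def posPartCpow (s : ℂ) (x : ℝ) : ℂ := (Ioi 0).indicator (fun x : ℝ ↦ (x : ℂ) ^ s) x

theorem posPartCpow_of_pos {s : ℂ} {x : ℝ} (hx : 0 < x) : posPartCpow s x = (x : ℂ) ^ s :=
  indicator_of_mem (mem_Ioi.2 hx) _

theorem posPartCpow_of_nonpos {s : ℂ} {x : ℝ} (hx : x ≤ 0) : posPartCpow s x = 0 :=
  indicator_of_notMem (notMem_Ioi.2 hx) _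

theorem posPartCpow_eq_mul {s : ℂ} {x : ℝ} (hx : x ≠ 0) :
    posPartCpow s x = x * posPartCpow (s - 1) x := by
  rcases hx.lt_or_gt with hneg | hpos
  · simp only [posPartCpow_of_nonpos hneg.le, mul_zero]
  · rw [posPartCpow_of_pos hpos, posPartCpow_of_pos hpos, cpow_sub _ _ (ofReal_ne_zero.2 hx),
      cpow_one, mul_div_cancel₀ _ (ofReal_ne_zero.2 hx)]

theorem continuous_posPartCpow {s : ℂ} (hs : 0 < s.re) : Continuous (posPartCpow s) := by
  have hs0 : s ≠ 0 := fun h ↦ by simp [h] at hs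
  have hmax : posPartCpow s = fun x ↦ ((max x 0 : ℝ) : ℂ) ^ s := by
    ext x
    rcases lt_or_ge 0 x with hx | hx
    · rw [posPartCpow_of_pos hx, max_eq_left hx.le]
    · rw [posPartCpow_of_nonpos hx, max_eq_right hx, ofReal_zero, zero_cpow hs0]
  rw [hmax]
  exact (continuous_ofReal_cpow_const hs).comp (continuous_id.max continuous_const)

theorem norm_hankelKernel_le (v : ℝ) (a z : ℂ) :
    ‖hankelKernel v a z‖ ≤ Real.exp (v * z.re) * (Real.exp (π * |a.im|) * ‖z‖ ^ (-a.re)) := by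
  have harg : z.arg * a.im ≤ π * |a.im| := calc
    z.arg * a.im ≤ |z.arg| * |a.im| := (le_abs_self _).trans (abs_mul _ _).le
    _ ≤ π * |a.im| := by gcongr; exact abs_arg_le_pi z
  have hcpow : ‖z ^ (-a)‖ ≤ Real.exp (z.arg * a.im) * ‖z‖ ^ (-a.re) := by
    simpa [div_eq_mul_inv, ← Real.exp_neg, mul_comm] using norm_cpow_le z (-a)
  rw [hankelKernel, norm_mul, norm_exp, re_ofReal_mul]
  gcongr
  exact hcpow.trans (by gcongr)

theorem hasDerivAt_hankelKernel (v : ℝ) (a : ℂ) {z : ℂ} (hz : 0 < z.re) :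
    HasDerivAt (hankelKernel v a) (v * hankelKernel v a z - a * hankelKernel v (a + 1) z) z := by
  have hexp : HasDerivAt (fun z : ℂ ↦ exp (v * z)) (exp (v * z) * v) z := by
    simpa using ((hasDerivAt_id z).const_mul (v : ℂ)).cexp
  have hcpow : HasDerivAt (fun z : ℂ ↦ z ^ (-a)) (-a * z ^ (-a - 1)) z := by
    simpa using (hasDerivAt_id z).cpow_const (c := -a) (Or.inl hz)
  refine (hexp.mul hcpow).congr_deriv ?_
  rw [hankelKernel, hankelKernel, neg_add']
  ring

theorem integrable_norm_add_mul_I_rpow {c r : ℝ} (hc : 0 < c) (hr : 1 < r) :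
    Integrable fun y : ℝ ↦ ‖(c + y * I : ℂ)‖ ^ (-r) := by
  have hone : Integrable fun y : ℝ ↦ (1 + ‖y‖ ^ 2) ^ (-r / 2) :=
    integrable_rpow_neg_one_add_norm_sq (by simpa using hr)
  refine ((hone.comp_div hc.ne').const_mul (c ^ (-r))).congr (.of_forall fun y ↦ ?_)
  have hnorm : ‖(c + y * I : ℂ)‖ = c * (1 + ‖y / c‖ ^ 2) ^ (1 / 2 : ℝ) := by
    rw [norm_add_mul_I, ← Real.sqrt_eq_rpow, Real.norm_eq_abs, sq_abs,
      Real.sqrt_eq_iff_mul_self_eq (by positivity) (by positivity), mul_mul_mul_comm,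
      Real.mul_self_sqrt (by positivity)]
    field_simp
  beta_reduce
  rw [hnorm, Real.mul_rpow hc.le (by positivity), ← Real.rpow_mul (by positivity)]
  ring_nf

theorem integrable_hankelKernel_vertical (v : ℝ) {a : ℂ} {c : ℝ} (hc : 0 < c) (ha : 1 < a.re) :
    Integrable fun y : ℝ ↦ hankelKernel v a (c + y * I) := by
  have hbound := ((integrable_norm_add_mul_I_rpow hc ha).const_mul
    (Real.exp (π * |a.im|))).const_mul (Real.exp (v * c))
  refine hbound.mono' (Continuous.aestronglyMeasurable ?_) (.of_forall fun y ↦ ?_)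
  · unfold hankelKernel
    exact Continuous.mul (by fun_prop)
      (Continuous.cpow (by fun_prop) continuous_const fun y ↦ Or.inl (by simpa using hc))
  · simpa using norm_hankelKernel_le v a (c + y * I)

theorem fourier_posPartCpow_mul_cexp {a : ℂ} {c : ℝ} (ha : 0 < a.re) (hc : 0 < c) (ξ : ℝ) :
    𝓕 (fun x : ℝ ↦ posPartCpow (a - 1) x * exp (-(c * x))) ξ =
      hankelKernel 0 a (c + (2 * π * ξ : ℝ) * I) * Gamma a := by
  have hre : 0 < (c + (2 * π * ξ : ℝ) * I : ℂ).re := by simpa using hc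
  rw [Real.fourier_eq', hankelKernel, ofReal_zero, zero_mul, exp_zero, one_mul,
    ← integral_cpow_mul_cexp_neg_mul_Ioi ha hre, ← integral_indicator measurableSet_Ioi]
  congr 1 with x
  rcases lt_or_ge 0 x with hx | hx
  · rw [indicator_of_mem (mem_Ioi.2 hx), posPartCpow_of_pos hx, smul_eq_mul, mul_left_comm,
      ← exp_add]
    congr 2
    simp only [RCLike.inner_apply, conj_trivial]
    push_cast
    ring
  · rw [indicator_of_notMem (notMem_Ioi.2 hx), posPartCpow_of_nonpos hx, zero_mul, smul_zero]

theorem integrable_posPartCpow_mul_cexp {a : ℂ} {c : ℝ} (ha : 0 < a.re) (hc : 0 < c) :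
    Integrable fun x : ℝ ↦ posPartCpow (a - 1) x * exp (-(c * x)) := by
  have hsupport := integrableOn_cpow_mul_cexp_neg_mul_Ioi ha (r := c) hc
  refine ((integrable_indicator_iff measurableSet_Ioi).2 hsupport).congr (.of_forall fun x ↦ ?_)
  exact indicator_mul_left _ _ _

theorem integral_hankelKernel_vertical (v : ℝ) {a : ℂ} {c : ℝ} (hc : 0 < c) (ha : 1 < a.re) :
    ∫ y : ℝ, hankelKernel v a (c + y * I) = 2 * π * posPartCpow (a - 1) v / Gamma a := by
  have ha0 : 0 < a.re := one_pos.trans ha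
  set f : ℝ → ℂ := fun x ↦ posPartCpow (a - 1) x * exp (-(c * x))
  have hfourier : 𝓕 f = fun ξ : ℝ ↦ hankelKernel 0 a (c + (2 * π * ξ : ℝ) * I) * Gamma a :=
    funext (fourier_posPartCpow_mul_cexp ha0 hc)
  have hcont : Continuous f := (continuous_posPartCpow (by simpa using ha)).mul (by fun_prop)
  have hint : Integrable f := integrable_posPartCpow_mul_cexp ha0 hc
  have hint' : Integrable (𝓕 f) := by
    rw [hfourier]
    exact ((integrable_hankelKernel_vertical 0 hc ha).comp_mul_left' (by positivity)).mul_const _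
  have hinv : f v = ∫ ξ : ℝ, hankelKernel v a (c + (2 * π * ξ : ℝ) * I) *
      (exp (-(c * v)) * Gamma a) := by
    rw [← congrFun (hcont.fourierInv_fourier_eq hint hint') v, Real.fourierInv_eq', hfourier]
    congr 1 with ξ
    have hexp : exp (v * (c + (2 * π * ξ : ℝ) * I)) * exp (-(c * v)) =
        exp ((2 * π * (v * ξ) : ℝ) * I) := by
      rw [← exp_add]
      push_cast
      ring_nf
    simp only [hankelKernel, RCLike.inner_apply, conj_trivial, smul_eq_mul, ofReal_zero, zero_mul,
      exp_zero, one_mul]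
    rw [← hexp]
    ring
  rw [Measure.integral_comp_mul_left (fun y : ℝ ↦ hankelKernel v a (c + y * I) *
    (exp (-(c * v)) * Gamma a)), integral_mul_const, abs_of_pos (by positivity), real_smul] at hinv
  have hcancel : posPartCpow (a - 1) v =
      (2 * (π : ℂ))⁻¹ * ((∫ y : ℝ, hankelKernel v a (c + y * I)) * Gamma a) :=
    mul_right_cancel₀ (exp_ne_zero (-(c * v))) (hinv.trans (by push_cast; ring))
  rw [eq_div_iff (Gamma_ne_zero_of_re_pos ha0), hcancel,
    mul_inv_cancel_left₀ (by simp [Real.pi_ne_zero])]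

/-- The filter on `ℂ` of points of the strip `0 < re z ≤ M` whose imaginary part tends along `f`. -/
def stripAt (f : Filter ℝ) (M : ℝ) : Filter ℂ := comap im f ⊓ 𝓟 {z | 0 < z.re ∧ z.re ≤ M}

theorem tendsto_stripAt {ι : Type*} {l : Filter ι} {f : Filter ℝ} {M : ℝ} {u : ι → ℂ}
    (him : Tendsto (fun i ↦ (u i).im) l f) (hre : ∀ᶠ i in l, 0 < (u i).re ∧ (u i).re ≤ M) :
    Tendsto u l (stripAt f M) :=
  tendsto_inf.2 ⟨tendsto_comap_iff.2 him, tendsto_principal.2 hre⟩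

theorem stripAt_mono {f g : Filter ℝ} (hfg : f ≤ g) (M : ℝ) : stripAt f M ≤ stripAt g M :=
  inf_le_inf_right _ (comap_mono hfg)

theorem tendsto_im_stripAt (f : Filter ℝ) (M : ℝ) : Tendsto im (stripAt f M) f :=
  tendsto_comap.mono_left inf_le_left

theorem eventually_stripAt (f : Filter ℝ) (M : ℝ) : ∀ᶠ z in stripAt f M, 0 < z.re ∧ z.re ≤ M :=
  mem_inf_of_right (mem_principal_self _)

theorem tendsto_hankelKernel_stripAt (v : ℝ) {a : ℂ} (ha : 0 < a.re) (M : ℝ) :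
    Tendsto (hankelKernel v a) (stripAt (cocompact ℝ) M) (𝓝 0) := by
  have hnorm : Tendsto (fun z : ℂ ↦ ‖z‖) (stripAt (cocompact ℝ) M) atTop :=
    tendsto_atTop_mono abs_im_le_norm
      (tendsto_norm_cocompact_atTop.comp (tendsto_im_stripAt (cocompact ℝ) M))
  have hdecay := (((tendsto_rpow_neg_atTop ha).comp hnorm).const_mul
    (Real.exp (π * |a.im|))).const_mul (Real.exp (|v| * M))
  rw [mul_zero, mul_zero] at hdecay
  refine squeeze_zero_norm' ?_ hdecay
  filter_upwards [eventually_stripAt (cocompact ℝ) M] with z ⟨hz, hzM⟩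
  refine (norm_hankelKernel_le v a z).trans ?_
  have hexponent : v * z.re ≤ |v| * M := by gcongr; exact le_abs_self v
  simp only [Function.comp_apply]
  gcongr

theorem tendsto_sub_of_hasDerivAt_stripAt {h H : ℂ → ℂ} {f : Filter ℝ} {M c : ℝ}
    (hH : ∀ z, 0 < z.re → HasDerivAt H (h z) z) (hc : c ∈ Ioc 0 M)
    (hlim : Tendsto h (stripAt f M) (𝓝 0)) :
    Tendsto (fun z ↦ H z - H (c + z.im * I)) (stripAt f M) (𝓝 0) := by
  have hM : 0 < M := hc.1.trans_le hc.2
  refine Metric.tendsto_nhds.2 fun ε hε ↦ ?_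
  have hsmall : ∀ᶠ y in f, ∀ w : ℂ, w.im = y → 0 < w.re ∧ w.re ≤ M → ‖h w‖ < ε / M := by
    simpa [stripAt, eventually_inf_principal, eventually_comap] using
      hlim.norm.eventually (gt_mem_nhds (by rw [norm_zero]; positivity : ‖(0 : ℂ)‖ < ε / M))
  filter_upwards [(tendsto_im_stripAt f M).eventually hsmall, eventually_stripAt f M]
    with z hsmall hz
  have hdist : ‖z - (c + z.im * I)‖ < M := by
    have hdiff : z - (c + z.im * I) = (z.re - c : ℝ) := by apply Complex.ext <;> simp
    rw [hdiff, norm_real, Real.norm_eq_abs, abs_sub_lt_iff]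
    constructor <;> linarith [hc.1, hc.2]
  have hslice : Convex ℝ ({w : ℂ | 0 < w.re} ∩ ({w | w.re ≤ M} ∩ {w | w.im = z.im})) :=
    (convex_halfSpace_re_gt 0).inter
      ((convex_halfSpace_re_le M).inter (convex_hyperplane imCLM.isLinear z.im))
  rw [dist_zero_right]
  calc ‖H z - H (c + z.im * I)‖ ≤ ε / M * ‖z - (c + z.im * I)‖ :=
        hslice.norm_image_sub_le_of_norm_hasDerivWithin_le
          (fun w hw ↦ (hH w hw.1).hasDerivWithinAt)
          (fun w hw ↦ (hsmall w hw.2.2 ⟨hw.1, hw.2.1⟩).le)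
          (by simpa using hc) ⟨hz.1, hz.2, rfl⟩
    _ < ε / M * M := by gcongr
    _ = ε := by field_simp

theorem tendsto_sub_of_integrable_vertical {h H : ℂ → ℂ} {M c : ℝ}
    (hH : ∀ z, 0 < z.re → HasDerivAt H (h z) z) (hc : c ∈ Ioc 0 M)
    (hlim : Tendsto h (stripAt (cocompact ℝ) M) (𝓝 0))
    (hint : Integrable fun y : ℝ ↦ h (c + y * I)) :
    Tendsto (fun p : ℂ × ℂ ↦ H p.1 - H p.2) (stripAt atTop M ×ˢ stripAt atBot M)
      (𝓝 (I * ∫ y : ℝ, h (c + y * I))) := by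
  have hFTC (y₁ y₂ : ℝ) : H (c + y₂ * I) - H (c + y₁ * I) =
      I * ∫ y in y₁..y₂, h (c + y * I) := by
    rw [← intervalIntegral.integral_const_mul]
    refine (intervalIntegral.integral_eq_sub_of_hasDerivAt
      (f := fun y : ℝ ↦ H (c + y * I)) (fun y _ ↦ ?_) (hint.const_mul I).intervalIntegrable).symm
    have hline : HasDerivAt (fun y : ℝ ↦ (c + y * I : ℂ)) I y := by
      simpa using (((hasDerivAt_id y).ofReal_comp).mul_const I).const_add (c : ℂ)
    simpa [Function.comp_def, mul_comm] using
      (hH (c + y * I) (by simpa using hc.1)).comp y hline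
  have hvertical : Tendsto (fun p : ℂ × ℂ ↦ H (c + p.1.im * I) - H (c + p.2.im * I))
      (stripAt atTop M ×ˢ stripAt atBot M) (𝓝 (I * ∫ y : ℝ, h (c + y * I))) := by
    have him := (tendsto_im_stripAt atTop M).prodMap (tendsto_im_stripAt atBot M)
    have hlimits := intervalIntegral_tendsto_integral hint tendsto_snd (tendsto_fst (g := atBot))
    simpa only [hFTC, Function.comp_def, Prod.map] using (hlimits.const_mul I).comp him
  have htop := (tendsto_sub_of_hasDerivAt_stripAt hH hc
    (hlim.mono_left (stripAt_mono atTop_le_cocompact M))).comp (tendsto_fst (g := stripAt atBot M))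
  have hbot := (tendsto_sub_of_hasDerivAt_stripAt hH hc
    (hlim.mono_left (stripAt_mono atBot_le_cocompact M))).comp (tendsto_snd (f := stripAt atTop M))
  have hsum := (htop.sub hbot).add hvertical
  rw [sub_zero, zero_add] at hsum
  exact hsum.congr fun p ↦ by simp only [Function.comp_apply]; ring

theorem tendsto_sub_of_hasDerivAt_hankelKernel {G : ℂ → ℂ} {v M : ℝ} {a : ℂ} (hv : v ≠ 0)
    (ha : 0 < a.re) (hM : 0 < M) (hG : ∀ z, 0 < z.re → HasDerivAt G (hankelKernel v a z) z) :
    Tendsto (fun p : ℂ × ℂ ↦ G p.1 - G p.2) (stripAt atTop M ×ˢ stripAt atBot M)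
      (𝓝 (2 * π * I * posPartCpow (a - 1) v / Gamma a)) := by
  have ha0 : a ≠ 0 := fun h ↦ by simp [h] at ha
  have hv0 : (v : ℂ) ≠ 0 := ofReal_ne_zero.2 hv
  have ha1 : 1 < (a + 1).re := by simpa using ha
  -- `(v G - K_a) / a` is a primitive of `K_{a+1}`, which decays fast enough to be integrable.
  set H : ℂ → ℂ := fun z ↦ (v * G z - hankelKernel v a z) / a
  have hH (z : ℂ) (hz : 0 < z.re) : HasDerivAt H (hankelKernel v (a + 1) z) z := by
    refine ((((hG z hz).const_mul (v : ℂ)).sub (hasDerivAt_hankelKernel v a hz)).div_const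
      a).congr_deriv ?_
    field_simp
    ring
  have hHlim := tendsto_sub_of_integrable_vertical hH ⟨hM, le_rfl⟩
    (tendsto_hankelKernel_stripAt v (one_pos.trans ha1) M)
    (integrable_hankelKernel_vertical v hM ha1)
  rw [integral_hankelKernel_vertical v hM ha1] at hHlim
  have hKlim := tendsto_hankelKernel_stripAt v ha M
  have htop := (hKlim.mono_left (stripAt_mono atTop_le_cocompact M)).comp
    (tendsto_fst (g := stripAt atBot M))
  have hbot := (hKlim.mono_left (stripAt_mono atBot_le_cocompact M)).comp
    (tendsto_snd (f := stripAt atTop M))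
  have hlim := ((hHlim.const_mul a).add (htop.sub hbot)).div_const (v : ℂ)
  have hvalue : (a * (I * (2 * π * posPartCpow (a + 1 - 1) v / Gamma (a + 1))) + (0 - 0)) / v =
      2 * π * I * posPartCpow (a - 1) v / Gamma a := by
    have hΓ := Gamma_ne_zero_of_re_pos ha
    rw [add_sub_cancel_right, posPartCpow_eq_mul hv, Gamma_add_one a ha0]
    field_simp
    simp
  rw [hvalue] at hlim
  refine hlim.congr fun p ↦ ?_
  simp only [H, Function.comp_apply]
  field_simp
  ring

theorem exists_hasDerivAt_hankelKernel (v : ℝ) (a : ℂ) :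
    ∃ G : ℂ → ℂ, ∀ z, 0 < z.re → HasDerivAt G (hankelKernel v a z) z := by
  have hopen : IsOpen {z : ℂ | 0 < z.re} := isOpen_lt continuous_const continuous_re
  obtain ⟨G, hG⟩ := (convex_halfSpace_re_gt 0).exists_forall_hasDerivWithinAt
    fun z hz ↦ (hasDerivAt_hankelKernel v a hz).differentiableAt.differentiableWithinAt
  exact ⟨G, fun z hz ↦ (hG z hz).hasDerivAt (hopen.mem_nhds hz)⟩

end Hankel

section AngularIntegral

open Complex Set
open scoped Topology Real Interval

/-- The logarithm of the modulus of `cmsContour t b ε θ`. -/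
noncomputable def logRadius (t b θ : ℝ) : ℝ := Real.log (t * (1 + b * θ) / Real.cos θ)

/-- The contour `t (1 + b θ) (1 + i ε tan θ)`, `-π/2 < θ < π/2`, written in polar form; it is used
with `ε = 1` (upwards) and `ε = -1` (downwards). -/
noncomputable def cmsContour (t b ε θ : ℝ) : ℂ := exp (logRadius t b θ + (ε * θ : ℝ) * I)

/-- The phase of the kernel `e^{εu} u^{ibt}` along `u = cmsContour t b ε`; up to an additive
constant it is `t` times the angular part of the Chambers–Mallows–Stuck variable with skewness
`π b / 2`. -/
noncomputable def cmsPhase (t b θ : ℝ) : ℝ :=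
  t * (1 + b * θ) * Real.tan θ + b * t * logRadius t b θ

theorem one_add_mul_pos_of_abs_le {b θ : ℝ} (hb : |b| ≤ 2 / π) (hθ : θ ∈ Ioo (-(π / 2)) (π / 2)) :
    0 < 1 + b * θ := by
  have hprod : |b * θ| < 1 := calc
    |b * θ| = |b| * |θ| := abs_mul b θ
    _ ≤ 2 / π * |θ| := by gcongr
    _ < 2 / π * (π / 2) := by gcongr; exact abs_lt.2 hθ
    _ = 1 := by field_simp
  linarith [(abs_lt.1 hprod).1]

theorem logRadius_neg (t b θ : ℝ) : logRadius t b (-θ) = logRadius t (-b) θ := by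
  simp only [logRadius, Real.cos_neg, mul_neg, neg_mul]

theorem cmsContour_neg (t b ε θ : ℝ) : cmsContour t b ε (-θ) = cmsContour t (-b) (-ε) θ := by
  simp only [cmsContour, logRadius_neg, mul_neg, neg_mul]

variable {t b ε θ : ℝ}

theorem exp_logRadius (ht : 0 < t) (hb : 0 < 1 + b * θ) (hθ : θ ∈ Ioo (-(π / 2)) (π / 2)) :
    Real.exp (logRadius t b θ) = t * (1 + b * θ) / Real.cos θ :=
  Real.exp_log (div_pos (mul_pos ht hb) (Real.cos_pos_of_mem_Ioo hθ))

theorem cmsContour_eq (ht : 0 < t) (hb : 0 < 1 + b * θ) (hθ : θ ∈ Ioo (-(π / 2)) (π / 2))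
    (hε : ε = 1 ∨ ε = -1) :
    cmsContour t b ε θ = (t * (1 + b * θ) : ℝ) + (ε * (t * (1 + b * θ) * Real.tan θ) : ℝ) * I := by
  have hcos : Real.cos (ε * θ) = Real.cos θ := by rcases hε with rfl | rfl <;> simp
  have hsin : Real.sin (ε * θ) = ε * Real.sin θ := by rcases hε with rfl | rfl <;> simp
  have hcosθ := (Real.cos_pos_of_mem_Ioo hθ).ne'
  have hcosθ' : cos (θ : ℂ) ≠ 0 := mod_cast hcosθ
  rw [cmsContour, exp_add, exp_mul_I, ← ofReal_exp, exp_logRadius ht hb hθ, ← ofReal_cos,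
    ← ofReal_sin, hcos, hsin, Real.tan_eq_sin_div_cos]
  push_cast
  field_simp

theorem log_cmsContour (hθ : θ ∈ Ioo (-(π / 2)) (π / 2)) (hε : ε = 1 ∨ ε = -1) :
    log (cmsContour t b ε θ) = logRadius t b θ + (ε * θ : ℝ) * I := by
  have him : (logRadius t b θ + (ε * θ : ℝ) * I : ℂ).im = ε * θ := by
    rw [add_im, ofReal_im, zero_add, im_ofReal_mul, I_im, mul_one]
  have hangle : |ε * θ| < π := by
    rcases hε with rfl | rfl <;> simp only [one_mul, neg_one_mul, abs_neg, abs_lt] <;>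
      constructor <;> linarith [hθ.1, hθ.2, Real.pi_pos]
  exact log_exp (him.symm ▸ (abs_lt.1 hangle).1) (him.symm ▸ (abs_lt.1 hangle).2.le)

theorem hankelKernel_cmsContour_mul (ht : 0 < t) (hb : 0 < 1 + b * θ)
    (hθ : θ ∈ Ioo (-(π / 2)) (π / 2)) (hε : ε = 1 ∨ ε = -1) :
    hankelKernel ε (1 - b * t * I) (cmsContour t b ε θ) * cmsContour t b ε θ =
      Real.exp (ε * t) * exp (cmsPhase t b θ * I) := by
  have hne : cmsContour t b ε θ ≠ 0 := exp_ne_zero _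
  have hεsq : (ε : ℂ) * ε = 1 := by rcases hε with rfl | rfl <;> simp
  have hpow : cmsContour t b ε θ ^ (-(1 - b * t * I)) * cmsContour t b ε θ =
      exp ((logRadius t b θ + (ε * θ : ℝ) * I) * (b * t * I)) := by
    rw [← log_cmsContour hθ hε, ← cpow_def_of_ne_zero hne]
    nth_rw 2 [← cpow_one (cmsContour t b ε θ)]
    rw [← cpow_add _ _ hne]
    ring_nf
  rw [hankelKernel, mul_assoc, hpow, cmsContour_eq ht hb hθ hε, ofReal_exp, ← exp_add, ← exp_add,
    cmsPhase]
  congr 1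
  push_cast
  linear_combination (t * (1 + b * θ) * tan θ * I : ℂ) * hεsq + ε * θ * b * t * I_mul_I

theorem hasDerivAt_logRadius (ht : 0 < t) (hb : 0 < 1 + b * θ) (hθ : θ ∈ Ioo (-(π / 2)) (π / 2)) :
    HasDerivAt (logRadius t b) (b / (1 + b * θ) + Real.tan θ) θ := by
  have hcos := (Real.cos_pos_of_mem_Ioo hθ).ne'
  have hnum : HasDerivAt (fun θ : ℝ ↦ t * (1 + b * θ)) (t * b) θ := by
    simpa using (((hasDerivAt_id θ).const_mul b).const_add 1).const_mul t
  refine ((hnum.div (Real.hasDerivAt_cos θ) hcos).log ?_).congr_deriv ?_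
  · exact div_ne_zero (mul_pos ht hb).ne' hcos
  · rw [Real.tan_eq_sin_div_cos, Pi.div_apply]
    field_simp
    ring

theorem hasDerivAt_cmsContour (ht : 0 < t) (hb : 0 < 1 + b * θ) (hθ : θ ∈ Ioo (-(π / 2)) (π / 2)) :
    HasDerivAt (cmsContour t b ε)
      (cmsContour t b ε θ * ((b / (1 + b * θ) + Real.tan θ : ℝ) + ε * I)) θ := by
  have hangle : HasDerivAt (fun θ : ℝ ↦ ((ε * θ : ℝ) * I : ℂ)) (ε * I) θ := by
    simpa using ((hasDerivAt_id θ).const_mul ε).ofReal_comp.mul_const I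
  exact ((hasDerivAt_logRadius ht hb hθ).ofReal_comp.add hangle).cexp

theorem re_cmsContour (ht : 0 < t) (hb : 0 < 1 + b * θ)
    (hθ : θ ∈ Ioo (-(π / 2)) (π / 2)) (hε : ε = 1 ∨ ε = -1) :
    (cmsContour t b ε θ).re = t * (1 + b * θ) := by
  rw [cmsContour_eq ht hb hθ hε, add_re, ofReal_re, re_ofReal_mul, I_re, mul_zero, add_zero]

theorem im_cmsContour (ht : 0 < t) (hb : 0 < 1 + b * θ)
    (hθ : θ ∈ Ioo (-(π / 2)) (π / 2)) (hε : ε = 1 ∨ ε = -1) :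
    (cmsContour t b ε θ).im = ε * (t * (1 + b * θ) * Real.tan θ) := by
  rw [cmsContour_eq ht hb hθ hε, add_im, ofReal_im, zero_add, im_ofReal_mul, I_im, mul_one]

theorem eventually_nhdsLT_pi_div_two : ∀ᶠ θ in 𝓝[<] (π / 2), θ ∈ Ioo (-(π / 2)) (π / 2) :=
  Ioo_mem_nhdsLT (by linarith [Real.pi_pos])

theorem tendsto_mul_tan_nhdsLT (ht : 0 < t) (hb : |b| < 2 / π) :
    Tendsto (fun θ ↦ t * (1 + b * θ) * Real.tan θ) (𝓝[<] (π / 2)) atTop := by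
  have hpos : 0 < t * (1 + b * (π / 2)) := by
    have hprod : |b * (π / 2)| < 1 := by
      rw [abs_mul, abs_of_pos Real.pi_div_two_pos]
      calc |b| * (π / 2) < 2 / π * (π / 2) := by gcongr
        _ = 1 := by field_simp
    exact mul_pos ht (by linarith [(abs_lt.1 hprod).1])
  have hcont : Continuous fun θ : ℝ ↦ t * (1 + b * θ) := by fun_prop
  exact (hcont.tendsto' _ _ rfl |>.mono_left nhdsWithin_le_nhds).pos_mul_atTop hpos
    Real.tendsto_tan_pi_div_two

theorem re_cmsContour_mem_Ioc (ht : 0 < t) (hb : |b| ≤ 2 / π)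
    (hθ : θ ∈ Ioo (-(π / 2)) (π / 2)) (hε : ε = 1 ∨ ε = -1) :
    0 < (cmsContour t b ε θ).re ∧ (cmsContour t b ε θ).re ≤ 2 * t := by
  have hpos := one_add_mul_pos_of_abs_le hb hθ
  have hpos' := one_add_mul_pos_of_abs_le (b := -b) (by rwa [abs_neg]) hθ
  rw [re_cmsContour ht hpos hθ hε]
  exact ⟨mul_pos ht hpos, by nlinarith⟩

theorem tendsto_cmsContour_one (ht : 0 < t) (hb : |b| < 2 / π) :
    Tendsto (cmsContour t b 1) (𝓝[<] (π / 2)) (stripAt atTop (2 * t)) := by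
  refine tendsto_stripAt ((tendsto_mul_tan_nhdsLT ht hb).congr' ?_) ?_ <;>
    filter_upwards [eventually_nhdsLT_pi_div_two] with θ hθ
  · rw [im_cmsContour ht (one_add_mul_pos_of_abs_le hb.le hθ) hθ (.inl rfl), one_mul]
  · exact re_cmsContour_mem_Ioc ht hb.le hθ (.inl rfl)

theorem tendsto_cmsContour_neg_one (ht : 0 < t) (hb : |b| < 2 / π) :
    Tendsto (cmsContour t b (-1)) (𝓝[<] (π / 2)) (stripAt atBot (2 * t)) := by
  refine tendsto_stripAt
    ((tendsto_neg_atTop_atBot.comp (tendsto_mul_tan_nhdsLT ht hb)).congr' ?_) ?_ <;>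
    filter_upwards [eventually_nhdsLT_pi_div_two] with θ hθ
  · rw [im_cmsContour ht (one_add_mul_pos_of_abs_le hb.le hθ) hθ (.inr rfl), neg_one_mul]
    rfl
  · exact re_cmsContour_mem_Ioc ht hb.le hθ (.inr rfl)

theorem measurable_cmsPhase (t b : ℝ) : Measurable (cmsPhase t b) := by
  unfold cmsPhase logRadius
  simp only [Real.tan_eq_sin_div_cos]
  fun_prop

theorem measurable_exp_cmsPhase (t b : ℝ) : Measurable fun θ ↦ exp (cmsPhase t b θ * I) :=
  measurable_exp.comp ((measurable_ofReal.comp (measurable_cmsPhase t b)).mul_const I)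

theorem intervalIntegrable_exp_cmsPhase (t b x y : ℝ) :
    IntervalIntegrable (fun θ ↦ exp (cmsPhase t b θ * I)) volume x y := by
  refine intervalIntegrable_const (c := (1 : ℝ)).mono_fun'
    (measurable_exp_cmsPhase t b).aestronglyMeasurable (.of_forall fun θ ↦ ?_)
  simp only [norm_exp_ofReal_mul_I, le_refl]

theorem hasDerivAt_comp_cmsContour {G : ℂ → ℂ} (ht : 0 < t) (hb : |b| ≤ 2 / π)
    (hε : ε = 1 ∨ ε = -1) (hθ : θ ∈ Ioo (-(π / 2)) (π / 2))
    (hG : ∀ z, 0 < z.re → HasDerivAt G (hankelKernel ε (1 - b * t * I) z) z) :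
    HasDerivAt (fun θ ↦ (Real.exp (-(ε * t)) : ℂ) * G (cmsContour t b ε θ))
      (exp (cmsPhase t b θ * I) * ((b / (1 + b * θ) + Real.tan θ : ℝ) + ε * I)) θ := by
  have hpos := one_add_mul_pos_of_abs_le hb hθ
  have hcomp := (hG _ (re_cmsContour_mem_Ioc ht hb hθ hε).1).comp θ
    (hasDerivAt_cmsContour (ε := ε) ht hpos hθ)
  refine (hcomp.const_mul (Real.exp (-(ε * t)) : ℂ)).congr_deriv ?_
  have hexp : (Real.exp (-(ε * t)) : ℂ) * Real.exp (ε * t) = 1 := by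
    rw [← ofReal_mul, ← Real.exp_add, neg_add_cancel, Real.exp_zero, ofReal_one]
  rw [← mul_assoc (hankelKernel _ _ _), hankelKernel_cmsContour_mul ht hpos hθ hε, mul_assoc,
    ← mul_assoc, hexp, one_mul]

theorem tendsto_comp_cmsContour_one {G : ℂ → ℂ} (ht : 0 < t) (hb : |b| < 2 / π)
    (hG : ∀ z, 0 < z.re → HasDerivAt G (hankelKernel 1 (1 - b * t * I) z) z) :
    Tendsto (fun x ↦ G (cmsContour t b 1 x) - G (cmsContour t b 1 (-x))) (𝓝[<] (π / 2))
      (𝓝 (2 * π * I / Gamma (1 - b * t * I))) := by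
  have hHankel := tendsto_sub_of_hasDerivAt_hankelKernel one_ne_zero
    (by simp : 0 < (1 - b * t * I : ℂ).re) (by positivity : 0 < 2 * t) hG
  rw [posPartCpow_of_pos one_pos, ofReal_one, one_cpow, mul_one] at hHankel
  have hbot := tendsto_cmsContour_neg_one (b := -b) ht (by rwa [abs_neg])
  simp only [cmsContour_neg]
  exact hHankel.comp ((tendsto_cmsContour_one ht hb).prodMk hbot)

theorem tendsto_comp_cmsContour_neg_one {G : ℂ → ℂ} (ht : 0 < t) (hb : |b| < 2 / π)
    (hG : ∀ z, 0 < z.re → HasDerivAt G (hankelKernel (-1) (1 - b * t * I) z) z) :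
    Tendsto (fun x ↦ G (cmsContour t b (-1) (-x)) - G (cmsContour t b (-1) x)) (𝓝[<] (π / 2))
      (𝓝 0) := by
  have hHankel := tendsto_sub_of_hasDerivAt_hankelKernel (neg_ne_zero.2 one_ne_zero)
    (by simp : 0 < (1 - b * t * I : ℂ).re) (by positivity : 0 < 2 * t) hG
  rw [posPartCpow_of_nonpos (by norm_num), mul_zero, zero_div] at hHankel
  have htop := tendsto_cmsContour_one (b := -b) ht (by rwa [abs_neg])
  simp only [cmsContour_neg, neg_neg]
  exact hHankel.comp (htop.prodMk (tendsto_cmsContour_neg_one ht hb))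

theorem continuous_intervalIntegral_neg_self {E : Type*} [NormedAddCommGroup E] [NormedSpace ℝ E]
    {f : ℝ → E} (hf : ∀ x y, IntervalIntegrable f volume x y) :
    Continuous fun x ↦ ∫ θ in -x..x, f θ := by
  have hsub (x : ℝ) : ∫ θ in -x..x, f θ = (∫ θ in 0..x, f θ) - ∫ θ in 0..-x, f θ :=
    (intervalIntegral.integral_interval_sub_left (hf _ _) (hf _ _)).symm
  have hprim := intervalIntegral.continuous_primitive hf 0
  simp only [hsub]
  exact hprim.sub (hprim.comp continuous_neg)

theorem integral_exp_cmsPhase_of_abs_lt (ht : 0 < t) (hb : |b| < 2 / π) :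
    ∫ θ in -(π / 2)..π / 2, exp (cmsPhase t b θ * I) =
      π * Real.exp (-t) / Gamma (1 - b * t * I) := by
  obtain ⟨G, hG⟩ := exists_hasDerivAt_hankelKernel 1 (1 - b * t * I)
  obtain ⟨G', hG'⟩ := exists_hasDerivAt_hankelKernel (-1) (1 - b * t * I)
  set D : ℝ → ℂ := fun θ ↦ Real.exp (-(1 * t)) * G (cmsContour t b 1 θ) -
    Real.exp (-(-1 * t)) * G' (cmsContour t b (-1) θ)
  -- The logarithmic derivatives of the two contours differ by `2 i`, their moduli being equal.
  have hderiv (θ : ℝ) (hθ : θ ∈ Ioo (-(π / 2)) (π / 2)) :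
      HasDerivAt D (exp (cmsPhase t b θ * I) * (2 * I)) θ := by
    refine ((hasDerivAt_comp_cmsContour ht hb.le (.inl rfl) hθ hG).sub
      (hasDerivAt_comp_cmsContour ht hb.le (.inr rfl) hθ hG')).congr_deriv ?_
    push_cast
    ring
  have hFTC : ∀ᶠ x in 𝓝[<] (π / 2),
      (∫ θ in -x..x, exp (cmsPhase t b θ * I)) * (2 * I) = D x - D (-x) := by
    filter_upwards [eventually_nhdsLT_pi_div_two] with x hx
    have hx' : -x ∈ Ioo (-(π / 2)) (π / 2) := ⟨neg_lt_neg hx.2, neg_lt.1 hx.1⟩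
    rw [← intervalIntegral.integral_mul_const]
    exact intervalIntegral.integral_eq_sub_of_hasDerivAt
      (fun θ hθ ↦ hderiv θ (ordConnected_Ioo.uIcc_subset hx' hx hθ))
      ((intervalIntegrable_exp_cmsPhase t b _ _).mul_const _)
  have hlimD : Tendsto (fun x ↦ D x - D (-x)) (𝓝[<] (π / 2))
      (𝓝 (Real.exp (-t) * (2 * π * I / Gamma (1 - b * t * I)))) := by
    have hlim := ((tendsto_comp_cmsContour_one ht hb hG).const_mul (Real.exp (-t) : ℂ)).add
      ((tendsto_comp_cmsContour_neg_one ht hb hG').const_mul (Real.exp t : ℂ))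
    rw [mul_zero, add_zero] at hlim
    refine hlim.congr fun x ↦ ?_
    simp only [D, one_mul, neg_mul, neg_neg]
    ring
  have hlimInt : Tendsto (fun x ↦ (∫ θ in -x..x, exp (cmsPhase t b θ * I)) * (2 * I))
      (𝓝[<] (π / 2)) (𝓝 ((∫ θ in -(π / 2)..π / 2, exp (cmsPhase t b θ * I)) * (2 * I))) :=
    (((continuous_intervalIntegral_neg_self
      (intervalIntegrable_exp_cmsPhase t b)).mul_const (2 * I)).tendsto _).mono_left
      nhdsWithin_le_nhds
  have hvalue := tendsto_nhds_unique (hlimInt.congr' hFTC) hlimD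
  have h2I : (2 * I : ℂ) ≠ 0 := by simp
  refine mul_right_cancel₀ h2I (hvalue.trans ?_)
  ring

theorem continuousOn_integral_exp_cmsPhase (ht : 0 < t) :
    ContinuousOn (fun b ↦ ∫ θ in Ioo (-(π / 2)) (π / 2), exp (cmsPhase t b θ * I))
      (Icc (-(2 / π)) (2 / π)) := by
  refine continuousOn_of_dominated (bound := fun _ ↦ 1) (fun b _ ↦ ?_) (fun b _ ↦ ?_)
    (integrable_const 1) ?_
  · exact (measurable_exp_cmsPhase t b).aestronglyMeasurable
  · simp only [norm_exp_ofReal_mul_I, le_refl, eventually_true]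
  · filter_upwards [ae_restrict_mem measurableSet_Ioo] with θ hθ
    have hlog : ContinuousOn (fun b ↦ logRadius t b θ) (Icc (-(2 / π)) (2 / π)) :=
      ContinuousOn.log (by fun_prop) fun b hb ↦ div_ne_zero
        (mul_pos ht (one_add_mul_pos_of_abs_le (abs_le.2 hb) hθ)).ne'
        (Real.cos_pos_of_mem_Ioo hθ).ne'
    unfold cmsPhase
    fun_prop

-- At `|b| = 2 / π` the factor `1 + b θ` vanishes at an endpoint and the contour may stay bounded;
-- this case is reached by continuity in `b`.
theorem integral_exp_cmsPhase (ht : 0 < t) (hb : |b| ≤ 2 / π) :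
    ∫ θ in Ioo (-(π / 2)) (π / 2), exp (cmsPhase t b θ * I) =
      π * Real.exp (-t) / Gamma (1 - b * t * I) := by
  have hinterior : EqOn (fun b ↦ ∫ θ in Ioo (-(π / 2)) (π / 2), exp (cmsPhase t b θ * I))
      (fun b ↦ π * Real.exp (-t) / Gamma (1 - b * t * I)) (Ioo (-(2 / π)) (2 / π)) := by
    intro b hb
    simpa only [intervalIntegral.integral_of_le (neg_le_self Real.pi_div_two_pos.le),
      integral_Ioc_eq_integral_Ioo] using integral_exp_cmsPhase_of_abs_lt ht (abs_lt.2 hb)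
  have hright : Continuous fun b : ℝ ↦ (π * Real.exp (-t) / Gamma (1 - b * t * I) : ℂ) := by
    simp only [div_eq_mul_inv]
    exact continuous_const.mul (differentiable_one_div_Gamma.continuous.comp (by fun_prop))
  have hclosure : Icc (-(2 / π)) (2 / π) ⊆ closure (Ioo (-(2 / π)) (2 / π)) :=
    (closure_Ioo (neg_lt_self (by positivity : 0 < 2 / π)).ne).ge
  exact hinterior.of_subset_closure (continuousOn_integral_exp_cmsPhase ht) hright.continuousOn
    Ioo_subset_Icc_self hclosure (abs_le.1 hb)

end AngularIntegral

section Probability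

open Complex Set
open scoped Real

theorem measurable_gammaPDF (p r : ℝ) : Measurable (gammaPDF p r) :=
  (measurable_gammaPDFReal p r).ennreal_ofReal

theorem integral_gammaMeasure {E : Type*} [NormedAddCommGroup E] [NormedSpace ℝ E] {p r : ℝ}
    (hp : 0 < p) (hr : 0 < r) (f : ℝ → E) :
    ∫ x, f x ∂gammaMeasure p r = ∫ x in Ioi 0, gammaPDFReal p r x • f x := by
  rw [gammaMeasure, integral_withDensity_eq_integral_toReal_smul (measurable_gammaPDF p r)
    (.of_forall fun x ↦ ENNReal.ofReal_lt_top)]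
  simp only [gammaPDF, ENNReal.toReal_ofReal (gammaPDFReal_nonneg hp hr _)]
  rw [← integral_Ici_eq_integral_Ioi]
  refine (setIntegral_eq_integral_of_forall_compl_eq_zero fun x hx ↦ ?_).symm
  rw [gammaPDFReal, if_neg (notMem_Ici.1 hx).not_ge, zero_smul]

theorem integral_cpow_gammaMeasure {p r : ℝ} {s : ℂ} (hp : 0 < p) (hr : 0 < r)
    (hs : 0 < (p + s).re) :
    ∫ x : ℝ, (x : ℂ) ^ s ∂gammaMeasure p r =
      r ^ (p : ℂ) / Gamma p * ((1 / r : ℂ) ^ (p + s) * Gamma (p + s)) := by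
  rw [integral_gammaMeasure hp hr, ← Complex.integral_cpow_mul_exp_neg_mul_Ioi hs hr,
    ← integral_const_mul]
  refine setIntegral_congr_fun measurableSet_Ioi fun x (hx : 0 < x) ↦ ?_
  have hpow : (x : ℂ) ^ (p + s - 1) = x ^ ((p : ℂ) - 1) * x ^ s := by
    rw [← cpow_add _ _ (ofReal_ne_zero.2 hx.ne')]
    ring_nf
  simp only [gammaPDFReal, if_pos hx.le, real_smul, hpow, Gamma_ofReal]
  push_cast [ofReal_cpow hr.le, ofReal_cpow hx.le]
  ring

theorem integral_cpow_expMeasure_one {s : ℂ} (hs : 0 < (1 + s).re) :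
    ∫ x : ℝ, (x : ℂ) ^ s ∂expMeasure 1 = Gamma (1 + s) := by
  rw [expMeasure, integral_cpow_gammaMeasure one_pos one_pos (by rwa [ofReal_one])]
  simp only [ofReal_one, one_cpow, Gamma_one, div_one, one_mul]

theorem ae_pos_gammaMeasure (p r : ℝ) : ∀ᵐ x ∂gammaMeasure p r, 0 < x := by
  rw [gammaMeasure, ae_withDensity_iff (measurable_gammaPDF p r)]
  filter_upwards [Measure.ae_ne volume (0 : ℝ)] with x hx hdensity
  by_contra hnonpos
  exact hdensity (gammaPDF_of_neg ((not_lt.1 hnonpos).lt_of_ne hx))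

variable {Ω : Type*} [MeasurableSpace Ω] {P : Measure Ω}

theorem integral_comp_of_isUniform {S E : Type*} [MeasurableSpace S] [NormedAddCommGroup E]
    [NormedSpace ℝ E] {μ : Measure S} {s : Set S} {X : Ω → S} {f : S → E}
    (hX : pdf.IsUniform X s P μ) (hXm : AEMeasurable X P)
    (hf : AEStronglyMeasurable f (P.map X)) :
    ∫ ω, f (X ω) ∂P = (μ.real s)⁻¹ • ∫ x in s, f x ∂μ := by
  rw [← integral_map hXm hf, hX, ProbabilityTheory.cond, integral_smul_measure, ENNReal.toReal_inv]
  rfl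

theorem ae_mem_of_isUniform {S : Type*} [MeasurableSpace S] {μ : Measure S} {s : Set S} {X : Ω → S}
    (hX : pdf.IsUniform X s P μ) (hXm : AEMeasurable X P) (hs : MeasurableSet s) :
    ∀ᵐ ω ∂P, X ω ∈ s :=
  ae_of_ae_map hXm (by rw [hX]; exact ae_cond_mem hs)

theorem integral_exp_I_mul_neg (X : Ω → ℝ) (t : ℝ) :
    ∫ ω, exp (I * (-t : ℝ) * X ω) ∂P = (starRingEnd ℂ) (∫ ω, exp (I * t * X ω) ∂P) := by
  rw [← integral_conj]
  congr 1 with ω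
  simp only [← exp_conj, map_mul, conj_I, conj_ofReal, ofReal_neg]
  ring_nf

theorem stableW_neg (α t : ℝ) : stableW α (-t) = stableW α t := by
  rw [stableW, stableW, abs_neg]

theorem stableChar_neg (α β γ μ t : ℝ) :
    stableChar α β γ μ (-t) = (starRingEnd ℂ) (stableChar α β γ μ t) := by
  simp only [stableChar, ← exp_conj, stableW_neg, abs_neg, Real.sign_neg, map_sub, map_mul,
    map_one, conj_I, conj_ofReal, ofReal_neg]
  ring_nf

theorem stableChar_one_of_pos (β : ℝ) {t : ℝ} (ht : 0 < t) :
    stableChar 1 β 1 0 t = Real.exp (-t) * (t : ℂ) ^ (-((2 / π * β : ℝ) * t * I)) := by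
  rw [stableChar, stableW, if_pos rfl, Real.sign_of_pos ht, abs_of_pos ht, Real.one_rpow, one_mul,
    Real.rpow_one, cpow_def_of_ne_zero (ofReal_ne_zero.2 ht.ne'), ← ofReal_log ht.le, ofReal_exp,
    ← exp_add]
  push_cast
  ring_nf

/-- The Chambers–Mallows–Stuck transform for the index `α = 1`: its value at an angle `θ` uniform on
`(-π/2, π/2)` and an independent standard exponential `w` has the stable law `S(1, β, 1, 0)`. -/
noncomputable def cmsVariable (β θ w : ℝ) : ℝ :=
  2 / π * ((π / 2 + β * θ) * Real.tan θ -
    β * Real.log (π / 2 * w * Real.cos θ / (π / 2 + β * θ)))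

theorem mul_cmsVariable {β θ w t : ℝ} (hb : |2 / π * β| ≤ 2 / π) (hθ : θ ∈ Ioo (-(π / 2)) (π / 2))
    (hw : 0 < w) (ht : 0 < t) :
    t * cmsVariable β θ w =
      cmsPhase t (2 / π * β) θ - 2 / π * β * t * (Real.log t + Real.log w) := by
  have hcos := Real.cos_pos_of_mem_Ioo hθ
  have hpos := one_add_mul_pos_of_abs_le hb hθ
  have hfactor : π / 2 + β * θ = π / 2 * (1 + 2 / π * β * θ) := by field_simp
  have hquot : π / 2 * w * Real.cos θ / (π / 2 + β * θ) =
      t * w / (t * (1 + 2 / π * β * θ) / Real.cos θ) := by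
    rw [hfactor]
    field_simp
  rw [cmsVariable, hquot, Real.log_div (by positivity) (by positivity), Real.log_mul ht.ne' hw.ne',
    ← logRadius, hfactor, cmsPhase]
  field_simp
  ring

theorem exp_mul_cmsVariable {β θ w t : ℝ} (hb : |2 / π * β| ≤ 2 / π)
    (hθ : θ ∈ Ioo (-(π / 2)) (π / 2)) (hw : 0 < w) (ht : 0 < t) :
    exp (I * t * cmsVariable β θ w) = (t : ℂ) ^ (-((2 / π * β : ℝ) * t * I)) *
      (exp (cmsPhase t (2 / π * β) θ * I) * (w : ℂ) ^ (-((2 / π * β : ℝ) * t * I))) := by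
  rw [cpow_def_of_ne_zero (ofReal_ne_zero.2 ht.ne'), cpow_def_of_ne_zero (ofReal_ne_zero.2 hw.ne'),
    ← exp_add, ← exp_add, ← ofReal_log ht.le, ← ofReal_log hw.le, mul_assoc, ← ofReal_mul,
    mul_cmsVariable hb hθ hw ht]
  push_cast
  ring_nf

theorem integral_exp_cmsVariable {β t : ℝ} {Θ W : Ω → ℝ} (hβ : |β| ≤ 1) (ht : 0 < t)
    (hΘ : pdf.IsUniform Θ (Ioo (-(π / 2)) (π / 2)) P) (hΘm : AEMeasurable Θ P)
    (hW : P.map W = expMeasure 1) (hWm : AEMeasurable W P) (hindep : IndepFun Θ W P) :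
    ∫ ω, exp (I * t * cmsVariable β (Θ ω) (W ω)) ∂P = stableChar 1 β 1 0 t := by
  set b : ℝ := 2 / π * β with hb_def
  have hb : |b| ≤ 2 / π := by
    rw [hb_def, abs_mul, abs_of_pos (by positivity)]
    exact mul_le_of_le_one_right (by positivity) hβ
  have hWpos : ∀ᵐ ω ∂P, 0 < W ω :=
    ae_of_ae_map hWm (p := fun w ↦ 0 < w) (by rw [hW]; exact ae_pos_gammaMeasure 1 1)
  have hsplit : ∀ᵐ ω ∂P, exp (I * t * cmsVariable β (Θ ω) (W ω)) = (t : ℂ) ^ (-(b * t * I)) *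
      (exp (cmsPhase t b (Θ ω) * I) * (W ω : ℂ) ^ (-(b * t * I))) := by
    filter_upwards [ae_mem_of_isUniform hΘ hΘm measurableSet_Ioo, hWpos] with ω hθ hw
    exact exp_mul_cmsVariable hb hθ hw ht
  have hphase := measurable_exp_cmsPhase t b
  have hpow : Measurable fun w : ℝ ↦ (w : ℂ) ^ (-(b * t * I)) := measurable_ofReal.pow_const _
  have hangular : ∫ ω, exp (cmsPhase t b (Θ ω) * I) ∂P =
      Real.exp (-t) / Gamma (1 - b * t * I) := by
    rw [integral_comp_of_isUniform hΘ hΘm hphase.aestronglyMeasurable, integral_exp_cmsPhase ht hb,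
      Real.volume_real_Ioo, sub_neg_eq_add, add_halves, max_eq_left Real.pi_pos.le, real_smul,
      mul_div_assoc, ofReal_inv, inv_mul_cancel_left₀ (ofReal_ne_zero.2 Real.pi_ne_zero)]
  have hradial : ∫ ω, (W ω : ℂ) ^ (-(b * t * I)) ∂P = Gamma (1 - b * t * I) := by
    rw [← integral_map hWm hpow.aestronglyMeasurable, hW, integral_cpow_expMeasure_one (by simp),
      ← sub_eq_add_neg]
  rw [integral_congr_ae hsplit, integral_const_mul, hindep.integral_fun_comp_mul_comp hΘm hWm
    hphase.aestronglyMeasurable hpow.aestronglyMeasurable, hangular, hradial,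
    div_mul_cancel₀ _ (Gamma_ne_zero_of_re_pos (by simp)), mul_comm, stableChar_one_of_pos β ht]

end Probability

theorem chambers_mallows_stuck_eq_one
    {Ω' : Type*} [MeasureSpace Ω'] [IsProbabilityMeasure (ℙ : Measure Ω')]
    (β : ℝ) (hβ : β ∈ Set.Icc (-1 : ℝ) 1)
    (Θ W : Ω' → ℝ) (hΘmeas : Measurable Θ) (hWmeas : Measurable W)
    (hΘ : pdf.IsUniform Θ (Set.Ioo (-(Real.pi / 2)) (Real.pi / 2)) ℙ volume)
    (hW : Measure.map W ℙ = expMeasure 1)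
    (hindep : IndepFun Θ W ℙ)
    (R : Ω' → ℝ)
    (hR : ∀ ω, R ω =
      2 / Real.pi * ((Real.pi / 2 + β * Θ ω) * Real.tan (Θ ω) -
        β * Real.log (Real.pi / 2 * W ω * Real.cos (Θ ω) / (Real.pi / 2 + β * Θ ω)))) :
    ∀ t : ℝ, ∫ ω, Complex.exp (Complex.I * (t : ℂ) * (R ω : ℂ)) = stableChar 1 β 1 0 t := by
  have hR' : R = fun ω ↦ cmsVariable β (Θ ω) (W ω) := funext hR
  have hpos (t : ℝ) (ht : 0 < t) :
      ∫ ω, Complex.exp (Complex.I * t * R ω) = stableChar 1 β 1 0 t := by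
    rw [hR']
    exact integral_exp_cmsVariable (abs_le.2 hβ) ht hΘ hΘmeas.aemeasurable hW hWmeas.aemeasurable
      hindep
  intro t
  rcases lt_trichotomy t 0 with hneg | rfl | hpos_t
  · rw [← neg_neg t, integral_exp_I_mul_neg, hpos _ (neg_pos.2 hneg), ← stableChar_neg]
  · simp [stableChar]
  · exact hpos t hpos_t
end
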